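/- arXiv:1409.6714 — 2 statements merged into one kernel-verified Lean document; each statement's English description precedes it below -/
import Mathlib

section
/- There exists a universal constant C > 0 such that for every d ∈ ℕ and every n ∈ ℕ there exist points x_1,…,x_n ∈ [0,1]^d whose star discrepancy satisfies D*_∞(x_1,…,x_n) ≤ C · √(d/n). -/
open MeasureTheory Set

/-! The points are chosen greedily against a finite family of test functions, and the supremum
over all boxes is reduced to that family by chaining (no logarithmic factor is lost).

*Grids.* In the coordinates `-log t_j`, the level `k` grid has mesh `4^(-k) / d`, so rounding every
coordinate of `t` changes the volume `∏ t_j` by a factor `exp (±4^(-k))`. A box of volume at least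
`4^(-k)` has `∑ -log t_j ≤ log 4^k`, so its rounded exponent vector has coordinate sum at most
`d * 16^k`, and there are only `(8 * 16^k)^d` such vectors (`card_expVecs_le`); boxes of smaller
volume are rounded down to the empty box. Hence `log #corners d k = O(d (k + 1))`, without the
`d log d` that a uniform mesh would cost.

*Point selection.* Let `s = √(d/n)`. A link of level `k` is a pair of nested corner boxes
whose difference has volume `p ≤ 2 * 4^(-k)`. For an indicator `f` of mean `p` and `|λ| ≤ 1` the
mean of `exp (λ (f - p) - λ² p)` is at most `1`; so the points can be selected one at a time
without increasing a weighted sum of exponentials over all links (`exists_potential_le`). With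
`λ = ± s 2^k`, weights `exp (-20 d (k + 1))` make the initial sum at most `1`, and every link of
level `k` ends up with local discrepancy at most `22 s (k + 1) / 2^k` (`exists_points`).

*Chaining.* The lower approximations `lowerPt k t` increase with `k` and start at the empty box, so
summing the link bounds over `k ≤ K` gives `O(s)` for the level `K` lower and upper approximations
of `t`, whose volumes differ from that of `t` by `O(4^(-K))`. Choosing `K` with `4^(-K)`
comparable to `s` finishes the proof. -/

/-- The star discrepancy of the point set `x 0, …, x (n-1)` in `[0,1]^d`. -/
noncomputable def starDisc {d n : ℕ} (x : Fin n → Fin d → ℝ) : ℝ :=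
  sSup {v : ℝ | ∃ t ∈ Set.Icc (0 : Fin d → ℝ) 1,
    v = |(∏ j, t j) -
      ((Finset.univ.filter fun i : Fin n => ∀ j, 0 ≤ x i j ∧ x i j < t j).card : ℝ) / n|}

/-! ### Multiplicative grids -/

/-- Exponent vectors in `ℕ^d` with coordinate sum at most `d * N`. -/
def expVecs (d N : ℕ) : Finset (Fin d → ℕ) :=
  (Fintype.piFinset fun _ : Fin d => Finset.range (d * N + 1)).filter fun a => ∑ j, a j ≤ d * N

lemma mem_expVecs {d N : ℕ} {a : Fin d → ℕ} (h : ∑ j, a j ≤ d * N) : a ∈ expVecs d N := by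
  simp only [expVecs, Finset.mem_filter, Fintype.mem_piFinset, Finset.mem_range]
  refine ⟨fun j => ?_, h⟩
  have := Finset.single_le_sum (f := a) (fun i _ => Nat.zero_le _) (Finset.mem_univ j)
  omega

/-- Generating function bound: with `r = N / (N + 1)`, the number of vectors times `r ^ (d * N)` is
at most `(∑ r ^ i) ^ d ≤ (N + 1) ^ d`, and `r ^ N ≥ 1 / e`. -/
lemma card_expVecs_le (d N : ℕ) (hN : 1 ≤ N) :
    ((expVecs d N).card : ℝ) ≤ (8 * N : ℝ) ^ d := by
  have hN' : (1 : ℝ) ≤ N := by exact_mod_cast hN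
  set r : ℝ := N / (N + 1) with hr
  have hr0 : 0 < r := by positivity
  have hr1 : r < 1 := by rw [hr, div_lt_one (by positivity)]; linarith
  have hgeo : ∑ i ∈ Finset.range (d * N + 1), r ^ i ≤ N + 1 := by
    have h := hasSum_geometric_of_lt_one hr0.le hr1
    have h2 : (1 - r)⁻¹ = N + 1 := by rw [hr]; field_simp; ring
    rw [h2] at h
    exact sum_le_hasSum _ (fun i _ => by positivity) h
  have h1 : ((expVecs d N).card : ℝ) * r ^ (d * N) ≤ (N + 1 : ℝ) ^ d := by
    calc ((expVecs d N).card : ℝ) * r ^ (d * N)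
        = ∑ a ∈ expVecs d N, r ^ (d * N) := by simp
      _ ≤ ∑ a ∈ expVecs d N, r ^ (∑ j, a j) := by
          refine Finset.sum_le_sum fun a ha => ?_
          exact pow_le_pow_of_le_one hr0.le hr1.le (Finset.mem_filter.1 ha).2
      _ ≤ ∑ a ∈ Fintype.piFinset fun _ : Fin d => Finset.range (d * N + 1), r ^ (∑ j, a j) :=
          Finset.sum_le_sum_of_subset_of_nonneg (Finset.filter_subset _ _)
            fun _ _ _ => by positivity
      _ = ∏ _j : Fin d, ∑ i ∈ Finset.range (d * N + 1), r ^ i := by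
          rw [Finset.prod_univ_sum]
          simp [Finset.prod_pow_eq_pow_sum]
      _ ≤ (N + 1 : ℝ) ^ d := by
          rw [Finset.prod_const, Finset.card_univ, Fintype.card_fin]
          exact pow_le_pow_left₀ (Finset.sum_nonneg fun i _ => by positivity) hgeo d
  have h2 : 1 ≤ 4 * r ^ N := by
    have hinv : (r⁻¹) ^ N ≤ 4 := by
      have : r⁻¹ ≤ Real.exp (1 / N) := by
        have := Real.add_one_le_exp (1 / (N : ℝ))
        refine le_trans (le_of_eq ?_) this
        rw [hr]; field_simp; ring
      calc (r⁻¹) ^ N ≤ (Real.exp (1 / N)) ^ N := pow_le_pow_left₀ (by positivity) this N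
        _ = Real.exp 1 := by
            rw [← Real.exp_nat_mul]; congr 1; field_simp
        _ ≤ 4 := by linarith [Real.exp_one_lt_d9]
    rw [inv_pow] at hinv
    have h3 : 0 < r ^ N := by positivity
    rw [inv_le_comm₀ h3 (by norm_num)] at hinv
    linarith
  calc ((expVecs d N).card : ℝ) = (expVecs d N).card * 1 := by ring
    _ ≤ (expVecs d N).card * (4 * r ^ N) ^ d := by
        gcongr
        exact one_le_pow₀ h2
    _ = ((expVecs d N).card * r ^ (d * N)) * 4 ^ d := by
        rw [mul_pow, ← pow_mul, mul_comm N d]; ring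
    _ ≤ (N + 1 : ℝ) ^ d * 4 ^ d := by gcongr
    _ = (4 * (N + 1) : ℝ) ^ d := by rw [← mul_pow]; ring
    _ ≤ (8 * N : ℝ) ^ d := pow_le_pow_left₀ (by positivity) (by linarith) d

/-- Grid point with coordinates `exp (-a_j / (d 4^k))`. -/
noncomputable def gridPt {d : ℕ} (k : ℕ) (a : Fin d → ℕ) : Fin d → ℝ :=
  fun j => Real.exp (-(a j / (d * 4 ^ k)))

open Classical in
/-- The upper corners of the level `k` boxes: the origin (empty box) and the grid points with
exponent sum at most `d * 16 ^ k`. -/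
noncomputable def corners (d k : ℕ) : Finset (Fin d → ℝ) :=
  insert 0 ((expVecs d (16 ^ k)).image (gridPt k))

lemma card_corners_le (d k : ℕ) (hd : 1 ≤ d) :
    ((corners d k).card : ℝ) ≤ (9 * 16 ^ k : ℝ) ^ d := by
  classical
  have h1 : (corners d k).card ≤ (expVecs d (16 ^ k)).card + 1 :=
    (Finset.card_insert_le _ _).trans (by gcongr; exact Finset.card_image_le)
  have h2 := card_expVecs_le d (16 ^ k) (Nat.one_le_pow _ _ (by norm_num))
  have h1' : ((corners d k).card : ℝ) ≤ (expVecs d (16 ^ k)).card + 1 := by exact_mod_cast h1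
  push_cast at h2
  have h3 : (1 : ℝ) ≤ 16 ^ k := one_le_pow₀ (by norm_num)
  have h4 : (8 * 16 ^ k : ℝ) ^ d + (16 ^ k) ^ d ≤ (8 * 16 ^ k + 16 ^ k : ℝ) ^ d :=
    pow_add_pow_le (by positivity) (by positivity) (by omega)
  have h5 : (1 : ℝ) ≤ (16 ^ k) ^ d := one_le_pow₀ h3
  have h6 : (8 * 16 ^ k + 16 ^ k : ℝ) = 9 * 16 ^ k := by ring
  rw [h6] at h4
  linarith

lemma gridPt_mem_corners {d k : ℕ} {a : Fin d → ℕ} (h : ∑ j, a j ≤ d * 16 ^ k) :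
    gridPt k a ∈ corners d k := by
  classical
  exact Finset.mem_insert_of_mem (Finset.mem_image_of_mem _ (mem_expVecs h))

lemma corners_subset {d k : ℕ} {u : Fin d → ℝ} (h : u ∈ corners d k) :
    u ∈ Set.Icc (0 : Fin d → ℝ) 1 := by
  classical
  rcases Finset.mem_insert.1 h with rfl | h
  · exact ⟨le_rfl, fun j => zero_le_one⟩
  · obtain ⟨a, -, rfl⟩ := Finset.mem_image.1 h
    refine ⟨fun j => (Real.exp_pos _).le, fun j => ?_⟩
    simp only [gridPt, Pi.one_apply, Real.exp_le_one_iff, Left.neg_nonpos_iff]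
    positivity

lemma prod_gridPt {d : ℕ} (k : ℕ) (a : Fin d → ℕ) :
    ∏ j, gridPt k a j = Real.exp (-((∑ j, (a j : ℝ)) / (d * 4 ^ k))) := by
  simp only [gridPt]
  rw [← Real.exp_sum, Finset.sum_neg_distrib, Finset.sum_div]

/-- The coordinate `-log (t j)` measured in units of the mesh `1 / (d * 4 ^ k)` of the level `k`
grid. It is meaningful only for `t j > 0`. -/
noncomputable def logCoord {d : ℕ} (k : ℕ) (t : Fin d → ℝ) (j : Fin d) : ℝ :=
  -Real.log (t j) * (d * 4 ^ k)

lemma logCoord_nonneg {d : ℕ} (k : ℕ) {t : Fin d → ℝ} (ht : t ∈ Set.Icc (0 : Fin d → ℝ) 1)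
    (j : Fin d) : 0 ≤ logCoord k t j :=
  mul_nonneg (neg_nonneg.2 (Real.log_nonpos (ht.1 j) (ht.2 j))) (by positivity)

lemma sum_logCoord {d : ℕ} (k : ℕ) {t : Fin d → ℝ} (hp : 0 < ∏ j, t j) :
    ∑ j, logCoord k t j = -Real.log (∏ j, t j) * (d * 4 ^ k) := by
  have : ∀ j ∈ Finset.univ, t j ≠ 0 := Finset.prod_ne_zero_iff.1 hp.ne'
  simp only [logCoord]
  rw [← Finset.sum_mul, Finset.sum_neg_distrib, Real.log_prod this]

/-- Rounding the logarithmic coordinates of a box of volume at least `4 ^ (-k)` stays inside the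
range of exponents allowed in `corners d k`. -/
lemma sum_round_le {d k : ℕ} {t : Fin d → ℝ} {a : Fin d → ℕ}
    (hp : (1 / 4 : ℝ) ^ k ≤ ∏ j, t j) (ha : ∀ j, (a j : ℝ) ≤ logCoord k t j + 1) :
    ∑ j, a j ≤ d * 16 ^ k := by
  have hp0 : 0 < ∏ j, t j := lt_of_lt_of_le (by positivity) hp
  have h1 : ∑ j, (a j : ℝ) ≤ -Real.log (∏ j, t j) * (d * 4 ^ k) + d := by
    calc ∑ j, (a j : ℝ) ≤ ∑ j, (logCoord k t j + 1) := Finset.sum_le_sum fun j _ => ha j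
      _ = _ := by rw [Finset.sum_add_distrib, sum_logCoord k hp0]; simp
  have h2 : -Real.log (∏ j, t j) ≤ 4 ^ k - 1 := by
    have := Real.log_le_log (by positivity) hp
    have h3 := Real.log_le_sub_one_of_pos (show (0 : ℝ) < 4 ^ k by positivity)
    rw [one_div, inv_pow, Real.log_inv] at this
    linarith
  have h3 : (1 : ℝ) ≤ 4 ^ k := one_le_pow₀ (by norm_num)
  have h4 : (16 : ℝ) ^ k = 4 ^ k * 4 ^ k := by rw [← mul_pow]; norm_num
  have h5 : ∑ j, (a j : ℝ) ≤ d * 16 ^ k := by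
    calc _ ≤ _ := h1
      _ ≤ (4 ^ k - 1) * (d * 4 ^ k) + d := by gcongr
      _ ≤ d * 16 ^ k := by
        rw [h4]
        nlinarith [mul_nonneg (Nat.cast_nonneg (α := ℝ) d) (sub_nonneg.2 h3)]
  exact_mod_cast h5

lemma exp_neg_logCoord {d k : ℕ} {t : Fin d → ℝ} (hd : 1 ≤ d) {j : Fin d} (h : 0 < t j) :
    Real.exp (-(logCoord k t j / (d * 4 ^ k))) = t j := by
  have : (0 : ℝ) < d := by exact_mod_cast hd
  rw [logCoord, mul_div_cancel_right₀ _ (by positivity), neg_neg, Real.exp_log h]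

/-- Lower approximation of `t` at level `k`: coordinates are rounded down to the grid, and boxes of
volume at most `4 ^ (-k)` are replaced by the empty box. -/
noncomputable def lowerPt {d : ℕ} (k : ℕ) (t : Fin d → ℝ) : Fin d → ℝ :=
  if ∏ j, t j ≤ (1 / 4 : ℝ) ^ k then 0 else gridPt k fun j => ⌈logCoord k t j⌉₊

lemma lowerPt_mem {d k : ℕ} {t : Fin d → ℝ} (ht : t ∈ Set.Icc (0 : Fin d → ℝ) 1) :
    lowerPt k t ∈ corners d k := by
  classical
  unfold lowerPt
  split_ifs with h
  · exact Finset.mem_insert_self _ _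
  · exact gridPt_mem_corners (sum_round_le (not_le.1 h).le
      fun j => (Nat.ceil_lt_add_one (logCoord_nonneg k ht j)).le)

lemma lowerPt_zero {d : ℕ} {t : Fin d → ℝ} (ht : t ∈ Set.Icc (0 : Fin d → ℝ) 1) :
    lowerPt 0 t = 0 := by
  rw [lowerPt, if_pos]
  rw [pow_zero]
  exact Finset.prod_le_one (fun j _ => ht.1 j) (fun j _ => ht.2 j)

lemma pos_of_prod_pos {d : ℕ} {t : Fin d → ℝ} (ht : t ∈ Set.Icc (0 : Fin d → ℝ) 1)
    (hp : 0 < ∏ j, t j) (j : Fin d) : 0 < t j :=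
  lt_of_le_of_ne (ht.1 j) (Ne.symm (Finset.prod_ne_zero_iff.1 hp.ne' j (Finset.mem_univ j)))

lemma lowerPt_le {d k : ℕ} {t : Fin d → ℝ} (hd : 1 ≤ d) (ht : t ∈ Set.Icc (0 : Fin d → ℝ) 1) :
    lowerPt k t ≤ t := by
  unfold lowerPt
  split_ifs with h
  · exact ht.1
  · intro j
    have hp : 0 < ∏ j, t j := lt_trans (by positivity) (not_le.1 h)
    rw [← exp_neg_logCoord (k := k) hd (pos_of_prod_pos ht hp j), gridPt]
    gcongr
    exact Nat.le_ceil _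

/-- Each grid refines the previous one, so the lower approximations increase with the level. -/
lemma lowerPt_mono {d k : ℕ} {t : Fin d → ℝ} :
    lowerPt k t ≤ lowerPt (k + 1) t := by
  unfold lowerPt
  by_cases h : ∏ j, t j ≤ (1 / 4 : ℝ) ^ k
  · rw [if_pos h]
    split_ifs
    · exact le_rfl
    · exact fun j => (Real.exp_pos _).le
  · have h' : ¬ ∏ j, t j ≤ (1 / 4 : ℝ) ^ (k + 1) := by
      have : (1 / 4 : ℝ) ^ (k + 1) ≤ (1 / 4) ^ k :=
        pow_le_pow_of_le_one (by norm_num) (by norm_num) (by omega)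
      intro h2; exact h (h2.trans this)
    rw [if_neg h, if_neg h']
    intro j
    simp only [gridPt]
    have h1 : ⌈logCoord (k + 1) t j⌉₊ ≤ 4 * ⌈logCoord k t j⌉₊ := by
      rw [Nat.ceil_le]
      push_cast
      have : logCoord (k + 1) t j = 4 * logCoord k t j := by simp only [logCoord]; ring
      rw [this]
      gcongr
      exact Nat.le_ceil _
    have h2 : (⌈logCoord (k + 1) t j⌉₊ : ℝ) ≤ 4 * ⌈logCoord k t j⌉₊ := by exact_mod_cast h1
    rw [Real.exp_le_exp, neg_le_neg_iff]
    calc (⌈logCoord (k + 1) t j⌉₊ : ℝ) / (d * 4 ^ (k + 1))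
        ≤ (4 * ⌈logCoord k t j⌉₊) / (d * 4 ^ (k + 1)) := by gcongr
      _ = _ := by rw [pow_succ, ← mul_assoc, mul_comm (4 : ℝ), mul_div_mul_right _ _ (by norm_num)]

lemma prod_lowerPt {d k : ℕ} {t : Fin d → ℝ} (hd : 1 ≤ d) (ht : t ∈ Set.Icc (0 : Fin d → ℝ) 1) :
    ∏ j, t j - ∏ j, lowerPt k t j ≤ (1 / 4 : ℝ) ^ k := by
  have hd' : (0 : ℝ) < d := by exact_mod_cast hd
  unfold lowerPt
  split_ifs with h
  · have : ∏ j, (0 : Fin d → ℝ) j = 0 := Finset.prod_eq_zero (Finset.mem_univ ⟨0, hd⟩) rfl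
    rw [this]; linarith
  · have hp : 0 < ∏ j, t j := lt_trans (by positivity) (not_le.1 h)
    have hp1 : ∏ j, t j ≤ 1 := Finset.prod_le_one (fun j _ => ht.1 j) (fun j _ => ht.2 j)
    rw [prod_gridPt]
    set P := ∏ j, t j with hP
    have h1 : (∑ j, (⌈logCoord k t j⌉₊ : ℝ)) ≤ -Real.log P * (d * 4 ^ k) + d := by
      calc _ ≤ ∑ j, (logCoord k t j + 1) := Finset.sum_le_sum fun j _ =>
              (Nat.ceil_lt_add_one (logCoord_nonneg k ht j)).le
        _ = _ := by rw [Finset.sum_add_distrib, sum_logCoord k hp, ← hP]; simp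
    have h2 : (∑ j, (⌈logCoord k t j⌉₊ : ℝ)) / (d * 4 ^ k) ≤ -Real.log P + (1 / 4) ^ k := by
      rw [div_le_iff₀ (by positivity)]
      refine h1.trans (le_of_eq ?_)
      rw [one_div, inv_pow]; field_simp
    have h3 : P * (1 - (1 / 4) ^ k) ≤
        Real.exp (-((∑ j, (⌈logCoord k t j⌉₊ : ℝ)) / (d * 4 ^ k))) := by
      calc P * (1 - (1 / 4) ^ k) ≤ P * Real.exp (-(1 / 4) ^ k) := by
            gcongr; exact Real.one_sub_le_exp_neg _
        _ = Real.exp (Real.log P - (1 / 4) ^ k) := by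
            rw [sub_eq_add_neg, Real.exp_add, Real.exp_log hp]
        _ ≤ _ := by rw [Real.exp_le_exp]; linarith
    have h4 : P * (1 / 4) ^ k ≤ 1 * (1 / 4) ^ k := by gcongr
    linarith

lemma exists_upperPt {d k : ℕ} {t : Fin d → ℝ} (hd : 1 ≤ d)
    (ht : t ∈ Set.Icc (0 : Fin d → ℝ) 1) (hp : (1 / 4 : ℝ) ^ k ≤ ∏ j, t j) :
    ∃ u ∈ corners d k, t ≤ u ∧ ∏ j, u j ≤ ∏ j, t j + 2 * (1 / 4) ^ k := by
  have hd' : (0 : ℝ) < d := by exact_mod_cast hd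
  have hp0 : 0 < ∏ j, t j := lt_of_lt_of_le (by positivity) hp
  have hp1 : ∏ j, t j ≤ 1 := Finset.prod_le_one (fun j _ => ht.1 j) (fun j _ => ht.2 j)
  refine ⟨gridPt k fun j => ⌊logCoord k t j⌋₊, gridPt_mem_corners (sum_round_le hp fun j => ?_),
    fun j => ?_, ?_⟩
  · linarith [Nat.floor_le (logCoord_nonneg k ht j)]
  · conv_lhs => rw [← exp_neg_logCoord (k := k) hd (pos_of_prod_pos ht hp0 j)]
    simp only [gridPt]
    gcongr
    exact Nat.floor_le (logCoord_nonneg k ht j)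
  · rw [prod_gridPt]
    set P := ∏ j, t j with hP
    have h1 : -Real.log P * (d * 4 ^ k) - d ≤ ∑ j, (⌊logCoord k t j⌋₊ : ℝ) := by
      calc _ = ∑ j, (logCoord k t j - 1) := by
              rw [Finset.sum_sub_distrib, sum_logCoord k hp0, ← hP]; simp
        _ ≤ _ := Finset.sum_le_sum fun j _ => (Nat.sub_one_lt_floor _).le
    have h2 : -Real.log P - (1 / 4) ^ k ≤ (∑ j, (⌊logCoord k t j⌋₊ : ℝ)) / (d * 4 ^ k) := by
      rw [le_div_iff₀ (by positivity)]
      refine le_trans (le_of_eq ?_) h1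
      rw [one_div, inv_pow]; field_simp
    have hq0 : (0 : ℝ) ≤ (1 / 4) ^ k := by positivity
    have hq1 : ((1 : ℝ) / 4) ^ k ≤ 1 := pow_le_one₀ (by norm_num) (by norm_num)
    have h3 : Real.exp ((1 / 4) ^ k) ≤ 1 + 2 * (1 / 4) ^ k := by
      have := (abs_le.1 (Real.abs_exp_sub_one_sub_id_le (x := (1 / 4) ^ k)
        (by rw [abs_of_nonneg hq0]; exact hq1))).2
      nlinarith
    calc _ ≤ Real.exp (Real.log P + (1 / 4) ^ k) := by rw [Real.exp_le_exp]; linarith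
      _ = P * Real.exp ((1 / 4) ^ k) := by rw [Real.exp_add, Real.exp_log hp0]
      _ ≤ P * (1 + 2 * (1 / 4) ^ k) := by gcongr
      _ ≤ P + 2 * (1 / 4) ^ k := by nlinarith

/-! ### Box indicators and their means -/

/-- Indicator of the anchored box `[0,u)`. -/
noncomputable def boxInd {d : ℕ} (u x : Fin d → ℝ) : ℝ :=
  if ∀ j, 0 ≤ x j ∧ x j < u j then 1 else 0

lemma boxInd_zero_or_one {d : ℕ} (u x : Fin d → ℝ) : boxInd u x = 0 ∨ boxInd u x = 1 := by
  unfold boxInd; split_ifs <;> simp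

lemma boxInd_mono {d : ℕ} {u v : Fin d → ℝ} (h : v ≤ u) (x : Fin d → ℝ) :
    boxInd v x ≤ boxInd u x := by
  unfold boxInd
  split_ifs with h1 h2
  · exact le_rfl
  · exact absurd (fun j => ⟨(h1 j).1, (h1 j).2.trans_le (h j)⟩) h2
  · exact zero_le_one
  · exact le_rfl

lemma boxInd_sub_zero_or_one {d : ℕ} {u v : Fin d → ℝ} (h : v ≤ u) (x : Fin d → ℝ) :
    boxInd u x - boxInd v x = 0 ∨ boxInd u x - boxInd v x = 1 := by
  have := boxInd_mono h x
  rcases boxInd_zero_or_one u x with h1 | h1 <;> rcases boxInd_zero_or_one v x with h2 | h2 <;>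
    grind

lemma boxInd_eq_indicator {d : ℕ} (u : Fin d → ℝ) :
    boxInd u = (Set.pi Set.univ fun j => Set.Ico ((0 : Fin d → ℝ) j) (u j)).indicator 1 := by
  ext x
  simp [boxInd, Set.indicator, Set.mem_pi]

lemma integrableOn_boxInd {d : ℕ} (u : Fin d → ℝ) :
    IntegrableOn (boxInd u) (Set.Icc (0 : Fin d → ℝ) 1) := by
  rw [boxInd_eq_indicator]
  have hm : MeasurableSet (Set.pi Set.univ fun j => Set.Ico ((0 : Fin d → ℝ) j) (u j)) :=
    MeasurableSet.univ_pi fun j => measurableSet_Ico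
  refine IntegrableOn.indicator ?_ hm
  exact integrableOn_const (C := (1 : ℝ)) (by simp [Real.volume_Icc_pi])

lemma setIntegral_boxInd {d : ℕ} {u : Fin d → ℝ} (hu : u ∈ Set.Icc (0 : Fin d → ℝ) 1) :
    ∫ x in Set.Icc (0 : Fin d → ℝ) 1, boxInd u x = ∏ j, u j := by
  have hm : MeasurableSet (Set.pi Set.univ fun j => Set.Ico ((0 : Fin d → ℝ) j) (u j)) :=
    MeasurableSet.univ_pi fun j => measurableSet_Ico
  have hsub : (Set.pi Set.univ fun j => Set.Ico ((0 : Fin d → ℝ) j) (u j)) ⊆ Set.Icc 0 1 :=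
    fun x hx => ⟨fun j => (hx j trivial).1, fun j => ((hx j trivial).2.le).trans (hu.2 j)⟩
  rw [boxInd_eq_indicator, setIntegral_indicator hm, Set.inter_eq_right.2 hsub]
  simp only [Pi.one_apply, setIntegral_const, smul_eq_mul, mul_one, Measure.real]
  rw [Real.volume_pi_Ico_toReal hu.1]
  simp

/-- First moment method for linear combinations of differences of box indicators on the cube. -/
lemma exists_le_mean {d : ℕ} {ι : Type*} (I : Finset ι) (u v : ι → Fin d → ℝ)
    (hu : ∀ i ∈ I, u i ∈ Set.Icc (0 : Fin d → ℝ) 1) (hv : ∀ i ∈ I, v i ∈ Set.Icc (0 : Fin d → ℝ) 1)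
    (c : ι → ℝ) :
    ∃ x ∈ Set.Icc (0 : Fin d → ℝ) 1, ∑ i ∈ I, c i * (boxInd (u i) x - boxInd (v i) x) ≤
      ∑ i ∈ I, c i * (∏ j, u i j - ∏ j, v i j) := by
  have hvol : volume (Set.Icc (0 : Fin d → ℝ) 1) = 1 := by simp [Real.volume_Icc_pi]
  have hintg : ∀ i ∈ I, IntegrableOn (fun x => c i * (boxInd (u i) x - boxInd (v i) x))
      (Set.Icc (0 : Fin d → ℝ) 1) := fun i _ =>
    ((integrableOn_boxInd (u i)).sub (integrableOn_boxInd (v i))).const_mul (c i)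
  obtain ⟨x, hx, h⟩ := exists_le_setAverage (μ := volume) (s := Set.Icc (0 : Fin d → ℝ) 1)
    (f := fun x => ∑ i ∈ I, c i * (boxInd (u i) x - boxInd (v i) x))
    (by rw [hvol]; simp) (by rw [hvol]; simp) (integrable_finsetSum I hintg)
  refine ⟨x, hx, h.trans (le_of_eq ?_)⟩
  rw [setAverage_eq, Measure.real, hvol, integral_finsetSum I hintg]
  simp only [ENNReal.toReal_one, inv_one, one_smul]
  refine Finset.sum_congr rfl fun i hi => ?_
  rw [integral_const_mul, integral_sub (integrableOn_boxInd _) (integrableOn_boxInd _),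
    setIntegral_boxInd (hu i hi), setIntegral_boxInd (hv i hi)]

/-! ### Greedy selection of the points -/

/-- One point at a time, points of `S` can be chosen so that a weighted sum of the exponentials
`exp (lam i * (∑ f i - n * p i) - n * lam i ^ 2 * p i)` never exceeds its initial value. The
hypothesis `hmean` is the only trace of the measure for which `f i` has mean `p i`. -/
lemma exists_potential_le {X ι : Type*} (S : Set X) (I : Finset ι) (f : ι → X → ℝ)
    (p lam w : ι → ℝ) (hf : ∀ i ∈ I, ∀ x, f i x = 0 ∨ f i x = 1) (hlam : ∀ i ∈ I, |lam i| ≤ 1)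
    (hw : ∀ i ∈ I, 0 ≤ w i)
    (hmean : ∀ c : ι → ℝ, ∃ x ∈ S, ∑ i ∈ I, c i * f i x ≤ ∑ i ∈ I, c i * p i) (n : ℕ) :
    ∃ x : Fin n → X, (∀ m, x m ∈ S) ∧
      ∑ i ∈ I, w i * Real.exp (lam i * (∑ m, f i (x m) - n * p i) - n * (lam i ^ 2 * p i))
        ≤ ∑ i ∈ I, w i := by
  induction n with
  | zero => exact ⟨Fin.elim0, fun m => m.elim0, by simp⟩
  | succ n ih =>
    obtain ⟨x, hxS, hx⟩ := ih
    set W : ι → ℝ := fun i =>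
      w i * Real.exp (lam i * (∑ m, f i (x m) - n * p i) - n * (lam i ^ 2 * p i)) with hW
    -- `q i` is the slope of the linear bound `exp (lam i * f) ≤ 1 + f * q i` for `f ∈ {0, 1}`
    set q : ι → ℝ := fun i => lam i + lam i ^ 2 with hq
    obtain ⟨y, hyS, hy⟩ := hmean fun i => W i * Real.exp (-(q i * p i)) * q i
    refine ⟨Fin.cons y x, fun m => Fin.cases hyS hxS m, ?_⟩
    have hW0 : ∀ i ∈ I, 0 ≤ W i := fun i hi => mul_nonneg (hw i hi) (Real.exp_pos _).le
    calc _ ≤ ∑ i ∈ I, W i * Real.exp (-(q i * p i)) * (1 + f i y * q i) := by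
          refine Finset.sum_le_sum fun i hi => ?_
          have h1 : Real.exp (lam i * f i y) ≤ 1 + f i y * q i := by
            rcases hf i hi y with h | h <;> rw [h]
            · simp
            · have := (abs_le.1 (Real.abs_exp_sub_one_sub_id_le (hlam i hi))).2
              simp only [hq, mul_one, one_mul]; linarith
          have h2 : lam i * (∑ m, f i ((Fin.cons y x : Fin (n + 1) → X) m) - (n + 1 : ℕ) * p i) -
              (n + 1 : ℕ) * (lam i ^ 2 * p i) =
              (lam i * (∑ m, f i (x m) - n * p i) - n * (lam i ^ 2 * p i)) + -(q i * p i) +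
                lam i * f i y := by
            rw [Fin.sum_univ_succ]
            simp only [Fin.cons_zero, Fin.cons_succ, hq]
            push_cast
            ring
          rw [h2, Real.exp_add, Real.exp_add, ← mul_assoc, ← mul_assoc]
          exact mul_le_mul_of_nonneg_left h1 (mul_nonneg (hW0 i hi) (Real.exp_pos _).le)
      _ = ∑ i ∈ I, W i * Real.exp (-(q i * p i)) +
            ∑ i ∈ I, W i * Real.exp (-(q i * p i)) * q i * f i y := by
          rw [← Finset.sum_add_distrib]
          exact Finset.sum_congr rfl fun i _ => by ring
      _ ≤ ∑ i ∈ I, W i * Real.exp (-(q i * p i)) +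
            ∑ i ∈ I, W i * Real.exp (-(q i * p i)) * q i * p i := by gcongr
      _ = ∑ i ∈ I, W i * (Real.exp (-(q i * p i)) * (q i * p i + 1)) := by
          rw [← Finset.sum_add_distrib]
          exact Finset.sum_congr rfl fun i _ => by ring
      _ ≤ ∑ i ∈ I, W i := by
          refine Finset.sum_le_sum fun i hi => mul_le_of_le_one_right (hW0 i hi) ?_
          calc _ ≤ Real.exp (-(q i * p i)) * Real.exp (q i * p i) := by
                gcongr; exact Real.add_one_le_exp _
            _ = 1 := by rw [← Real.exp_add]; simp
      _ ≤ _ := hx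

open Classical in
/-- The links of level `k`: nested pairs of corners of levels `k` and `k + 1` whose difference has
volume at most `2 * 4 ^ (-k)`. -/
noncomputable def links (d k : ℕ) : Finset ((Fin d → ℝ) × (Fin d → ℝ)) :=
  (corners d k ×ˢ corners d (k + 1)).filter fun b =>
    b.1 ≤ b.2 ∧ ∏ j, b.2 j - ∏ j, b.1 j ≤ 2 * (1 / 4 : ℝ) ^ k

/-- The links of level `k`, each counted with both signs and weight `exp (-20 d (k + 1))`, have
total weight at most `2 ^ (-(k + 1))`. -/
lemma weight_links_le (d k : ℕ) (hd : 1 ≤ d) :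
    ((links d k).card : ℝ) * (2 * Real.exp (-(20 * d * (k + 1)))) ≤ (1 / 2) ^ (k + 1) := by
  classical
  have h1 : ((links d k).card : ℝ) ≤ (1296 * 256 ^ k : ℝ) ^ d := by
    have h : (links d k).card ≤ (corners d k).card * (corners d (k + 1)).card := by
      rw [← Finset.card_product]; exact Finset.card_filter_le _ _
    calc ((links d k).card : ℝ) ≤ (corners d k).card * (corners d (k + 1)).card := by
          exact_mod_cast h
      _ ≤ (9 * 16 ^ k : ℝ) ^ d * (9 * 16 ^ (k + 1) : ℝ) ^ d := by
          gcongr <;> exact card_corners_le _ _ hd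
      _ = (1296 * 256 ^ k : ℝ) ^ d := by
          rw [← mul_pow, show (256 : ℝ) = 16 * 16 by norm_num, mul_pow 16 16]; congr 1; ring
  have h2 : Real.exp (-(20 * d * (k + 1))) ≤ (((1 / 2 : ℝ) ^ 20) ^ (k + 1)) ^ d := by
    have : Real.exp (-1) ≤ 1 / 2 := by
      rw [Real.exp_neg, one_div]
      gcongr
      linarith [Real.add_one_le_exp (1 : ℝ)]
    calc Real.exp (-(20 * d * (k + 1))) = ((Real.exp (-1) ^ 20) ^ (k + 1)) ^ d := by
          rw [← pow_mul, ← pow_mul, ← Real.exp_nat_mul]; push_cast; ring_nf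
      _ ≤ _ := by gcongr
  have h3 : (1296 * 256 ^ k : ℝ) * ((1 / 2 : ℝ) ^ 20) ^ (k + 1) ≤ (1 / 2) ^ (k + 2) := by
    have e : (256 : ℝ) ^ k * ((1 / 2 : ℝ) ^ 20) ^ k ≤ (1 / 2) ^ k := by
      rw [← mul_pow]; gcongr; norm_num
    calc (1296 * 256 ^ k : ℝ) * ((1 / 2 : ℝ) ^ 20) ^ (k + 1)
        = (256 ^ k * ((1 / 2 : ℝ) ^ 20) ^ k) * (1296 * (1 / 2) ^ 20) := by ring
      _ ≤ (1 / 2) ^ k * (1 / 2) ^ 2 := by gcongr; norm_num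
      _ = _ := by ring
  calc ((links d k).card : ℝ) * (2 * Real.exp (-(20 * d * (k + 1))))
      ≤ (1296 * 256 ^ k : ℝ) ^ d * (2 * (((1 / 2 : ℝ) ^ 20) ^ (k + 1)) ^ d) := by gcongr
    _ = 2 * ((1296 * 256 ^ k : ℝ) * ((1 / 2 : ℝ) ^ 20) ^ (k + 1)) ^ d := by
        rw [mul_pow _ (((1 / 2 : ℝ) ^ 20) ^ (k + 1)) d, mul_left_comm]
    _ ≤ 2 * ((1 / 2) ^ (k + 2)) ^ d := by gcongr
    _ ≤ 2 * ((1 / 2) ^ (k + 2)) ^ 1 := by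
        gcongr 2 * ?_
        exact pow_le_pow_of_le_one (by positivity) (pow_le_one₀ (by norm_num) (by norm_num)) hd
    _ = _ := by ring

/-- There are `n` points for which every link of level `k ≤ K` has discrepancy at most
`22 * s * (k + 1) / 2 ^ k`, simultaneously. -/
lemma exists_points (d n K : ℕ) (hd : 1 ≤ d) (hn : 1 ≤ n) (s : ℝ) (hs : s = Real.sqrt (d / n))
    (hK : s * 2 ^ K ≤ 1) :
    ∃ x : Fin n → Fin d → ℝ, (∀ i, x i ∈ Set.Icc (0 : Fin d → ℝ) 1) ∧
      ∀ k ≤ K, ∀ b ∈ links d k,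
        |∑ m, (boxInd b.2 (x m) - boxInd b.1 (x m)) - n * (∏ j, b.2 j - ∏ j, b.1 j)| ≤
          n * (22 * s * ((k + 1) / 2 ^ k)) := by
  classical
  have hd' : (1 : ℝ) ≤ d := by exact_mod_cast hd
  have hn' : (1 : ℝ) ≤ n := by exact_mod_cast hn
  have hs0 : 0 < s := by rw [hs]; positivity
  have hss : n * s ^ 2 = d := by rw [hs, Real.sq_sqrt (by positivity)]; field_simp
  -- an index is a level `k`, a link, and a sign
  let I : Finset (Σ _ : ℕ, ((Fin d → ℝ) × (Fin d → ℝ)) × ℝ) :=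
    (Finset.range (K + 1)).sigma fun k => links d k ×ˢ {1, -1}
  have hI : ∀ i ∈ I, i.1 ≤ K ∧ i.2.1.1 ∈ corners d i.1 ∧ i.2.1.2 ∈ corners d (i.1 + 1) ∧
      i.2.1.1 ≤ i.2.1.2 ∧ (i.2.2 = 1 ∨ i.2.2 = -1) := by
    rintro ⟨k, ⟨v, u⟩, e⟩ hi
    simp only [I, links, Finset.mem_sigma, Finset.mem_range, Finset.mem_product,
      Finset.mem_filter, Finset.mem_insert, Finset.mem_singleton] at hi
    exact ⟨Nat.lt_succ_iff.1 hi.1, hi.2.1.1.1, hi.2.1.1.2, hi.2.1.2.1, hi.2.2⟩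
  obtain ⟨x, hxS, hx⟩ := exists_potential_le (Set.Icc (0 : Fin d → ℝ) 1) I
    (fun i x => boxInd i.2.1.2 x - boxInd i.2.1.1 x)
    (fun i => ∏ j, i.2.1.2 j - ∏ j, i.2.1.1 j)
    (fun i => i.2.2 * (s * 2 ^ i.1))
    (fun i => Real.exp (-(20 * d * (i.1 + 1))))
    (fun i hi x => boxInd_sub_zero_or_one (hI i hi).2.2.2.1 x)
    (fun i hi => by
      have h1 : |i.2.2| = 1 := by rcases (hI i hi).2.2.2.2 with h | h <;> rw [h] <;> simp
      rw [abs_mul, h1, one_mul, abs_of_pos (by positivity)]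
      refine le_trans ?_ hK
      gcongr
      · norm_num
      · exact (hI i hi).1)
    (fun i _ => (Real.exp_pos _).le)
    (exists_le_mean I _ _ (fun i hi => corners_subset (hI i hi).2.2.1)
      (fun i hi => corners_subset (hI i hi).2.1)) n
  have htot : ∑ i ∈ I, Real.exp (-(20 * d * (i.1 + 1))) ≤ 1 := by
    calc _ = ∑ k ∈ Finset.range (K + 1),
          ((links d k).card : ℝ) * (2 * Real.exp (-(20 * d * (k + 1)))) := by
          rw [Finset.sum_sigma]
          refine Finset.sum_congr rfl fun k _ => ?_
          have : ({1, -1} : Finset ℝ).card = 2 := Finset.card_pair (by norm_num)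
          simp only
          rw [Finset.sum_const, Finset.card_product, this, nsmul_eq_mul]
          push_cast; ring
      _ ≤ ∑ k ∈ Finset.range (K + 1), (1 / 2 : ℝ) ^ (k + 1) :=
          Finset.sum_le_sum fun k _ => weight_links_le d k hd
      _ ≤ 1 := by
          have : ∀ m : ℕ, ∑ k ∈ Finset.range m, (1 / 2 : ℝ) ^ (k + 1) = 1 - (1 / 2) ^ m := by
            intro m
            induction m with
            | zero => simp
            | succ m ih => rw [Finset.sum_range_succ, ih]; ring
          rw [this]
          linarith [show (0 : ℝ) ≤ (1 / 2) ^ (K + 1) by positivity]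
  refine ⟨x, hxS, fun k hk b hb => ?_⟩
  set T := ∑ m, (boxInd b.2 (x m) - boxInd b.1 (x m)) - n * (∏ j, b.2 j - ∏ j, b.1 j) with hT
  have hp : ∏ j, b.2 j - ∏ j, b.1 j ≤ 2 * (1 / 4 : ℝ) ^ k := (Finset.mem_filter.1 hb).2.2
  have key : ∀ e : ℝ, e = 1 ∨ e = -1 → e * T ≤ n * (22 * s * ((k + 1) / 2 ^ k)) := by
    intro e he
    have hmem : (⟨k, b, e⟩ : Σ _ : ℕ, ((Fin d → ℝ) × (Fin d → ℝ)) × ℝ) ∈ I := by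
      simp only [I, Finset.mem_sigma, Finset.mem_range, Finset.mem_product, Finset.mem_insert,
        Finset.mem_singleton]
      exact ⟨by omega, hb, he⟩
    -- all terms of the potential are positive, so each of them is at most `1`
    have h1 := (Finset.single_le_sum
      (fun i _ => (mul_pos (Real.exp_pos _) (Real.exp_pos _)).le) hmem).trans (hx.trans htot)
    simp only [← hT] at h1
    rw [← Real.exp_add, Real.exp_le_one_iff] at h1
    have he2 : e ^ 2 = 1 := by rcases he with h | h <;> rw [h] <;> norm_num
    have h42 : (2 ^ k : ℝ) ^ 2 * (1 / 4) ^ k = 1 := by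
      rw [← pow_mul, mul_comm k 2, pow_mul, ← mul_pow]; norm_num
    have h2 : n * ((e * (s * 2 ^ k)) ^ 2 * (∏ j, b.2 j - ∏ j, b.1 j)) ≤ 2 * d := by
      calc _ = d * (2 ^ k) ^ 2 * (∏ j, b.2 j - ∏ j, b.1 j) := by
            rw [mul_pow, mul_pow, he2, ← hss]; ring
        _ ≤ d * (2 ^ k) ^ 2 * (2 * (1 / 4) ^ k) := by gcongr
        _ = 2 * d * ((2 ^ k : ℝ) ^ 2 * (1 / 4) ^ k) := by ring
        _ = 2 * d := by rw [h42, mul_one]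
    have h3 : (e * T) * (s * 2 ^ k) ≤ 22 * d * (k + 1) := by
      have : (0 : ℝ) ≤ d * k := by positivity
      linarith
    have h4 : e * T ≤ 22 * d * (k + 1) / (s * 2 ^ k) := by rwa [le_div_iff₀ (by positivity)]
    refine h4.trans (le_of_eq ?_)
    rw [← hss]; field_simp
  exact abs_le.2 ⟨by linarith [key (-1) (Or.inr rfl)], by linarith [key 1 (Or.inl rfl)]⟩

/-! ### Chaining -/

/-- Signed local discrepancy of the points `x` at the box `[0,t)`. -/
noncomputable def locDisc {d n : ℕ} (x : Fin n → Fin d → ℝ) (t : Fin d → ℝ) : ℝ :=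
  ∏ j, t j - (∑ m, boxInd t (x m)) / n

lemma sum_boxInd {d n : ℕ} (x : Fin n → Fin d → ℝ) (t : Fin d → ℝ) :
    ∑ m, boxInd t (x m) =
      ((Finset.univ.filter fun i : Fin n => ∀ j, 0 ≤ x i j ∧ x i j < t j).card : ℝ) := by
  simp [boxInd]

lemma starDisc_le {d n : ℕ} {x : Fin n → Fin d → ℝ} {B : ℝ} (hB : 0 ≤ B)
    (h : ∀ t ∈ Set.Icc (0 : Fin d → ℝ) 1, |locDisc x t| ≤ B) : starDisc x ≤ B := by
  refine Real.sSup_le ?_ hB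
  rintro v ⟨t, ht, rfl⟩
  have := h t ht
  rwa [locDisc, sum_boxInd] at this

lemma abs_locDisc_le_one {d n : ℕ} (x : Fin n → Fin d → ℝ) {t : Fin d → ℝ}
    (ht : t ∈ Set.Icc (0 : Fin d → ℝ) 1) : |locDisc x t| ≤ 1 := by
  have h1 : ∏ j, t j ≤ 1 := Finset.prod_le_one (fun j _ => ht.1 j) (fun j _ => ht.2 j)
  have h0 : 0 ≤ ∏ j, t j := Finset.prod_nonneg fun j _ => ht.1 j
  have h2 : 0 ≤ ∑ m, boxInd t (x m) := by rw [sum_boxInd]; positivity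
  have h3 : (∑ m, boxInd t (x m)) / n ≤ 1 := by
    refine div_le_one_of_le₀ ?_ (by positivity)
    rw [sum_boxInd]
    exact_mod_cast (Finset.card_filter_le _ _).trans (by simp)
  have h4 : 0 ≤ (∑ m, boxInd t (x m)) / n := by positivity
  rw [locDisc, abs_le]
  constructor <;> linarith

lemma sum_boxInd_div_mono {d n : ℕ} (x : Fin n → Fin d → ℝ) {u v : Fin d → ℝ} (h : v ≤ u) :
    (∑ m, boxInd v (x m)) / (n : ℝ) ≤ (∑ m, boxInd u (x m)) / n := by
  gcongr
  exact boxInd_mono h _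

/-- A box of volume at most `c` can be enlarged to one of volume exactly `c`, along the segment
from `t` to `1`. -/
lemma exists_enlarge {d : ℕ} {t : Fin d → ℝ} (ht : t ∈ Set.Icc (0 : Fin d → ℝ) 1) {c : ℝ}
    (hc : c ≤ 1) (h : ∏ j, t j ≤ c) :
    ∃ t' ∈ Set.Icc (0 : Fin d → ℝ) 1, t ≤ t' ∧ ∏ j, t' j = c := by
  let g : ℝ → ℝ := fun r => ∏ j, (t j + r * (1 - t j))
  have hg : ContinuousOn g (Set.Icc 0 1) := by
    apply Continuous.continuousOn; fun_prop
  obtain ⟨r, hr, hrc⟩ := intermediate_value_Icc zero_le_one hg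
    (show c ∈ Set.Icc (g 0) (g 1) by simp [g, h, hc])
  have hle : ∀ j, t j ≤ t j + r * (1 - t j) := fun j =>
    le_add_of_nonneg_right (mul_nonneg hr.1 (sub_nonneg.2 (ht.2 j)))
  refine ⟨fun j => t j + r * (1 - t j), ⟨fun j => (ht.1 j).trans (hle j), fun j => ?_⟩, hle, hrc⟩
  have : r * (1 - t j) ≤ 1 * (1 - t j) :=
    mul_le_mul_of_nonneg_right hr.2 (sub_nonneg.2 (ht.2 j))
  simp only [Pi.one_apply]; linarith

lemma sum_chain (m : ℕ) :
    ∑ k ∈ Finset.range m, ((k + 1 : ℝ) / 2 ^ k) = 4 - (2 * m + 4) / 2 ^ m := by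
  induction m with
  | zero => norm_num
  | succ m ih =>
    rw [Finset.sum_range_succ, ih]
    push_cast
    field_simp
    ring

/-- The local discrepancy at a box of volume at least `4 ^ (-(K + 1))`, by following the chain
`lowerPt 0 t ≤ ⋯ ≤ lowerPt K t ≤ u`, where `u ≥ t` is the upper approximation of level `K + 1`. -/
lemma chaining {d n K : ℕ} (hd : 1 ≤ d) (hn : 1 ≤ n) {s : ℝ} (hs : 0 ≤ s)
    {x : Fin n → Fin d → ℝ}
    (hx : ∀ k ≤ K, ∀ b ∈ links d k,
        |∑ m, (boxInd b.2 (x m) - boxInd b.1 (x m)) - n * (∏ j, b.2 j - ∏ j, b.1 j)| ≤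
          n * (22 * s * ((k + 1) / 2 ^ k)))
    {t : Fin d → ℝ} (ht : t ∈ Set.Icc (0 : Fin d → ℝ) 1)
    (hp : (1 / 4 : ℝ) ^ (K + 1) ≤ ∏ j, t j) :
    |locDisc x t| ≤ 88 * s + (1 / 4) ^ K := by
  classical
  have hn' : (0 : ℝ) < n := by exact_mod_cast hn
  have step : ∀ k ≤ K, ∀ v ∈ corners d k, ∀ u ∈ corners d (k + 1), v ≤ u →
      ∏ j, u j - ∏ j, v j ≤ 2 * (1 / 4 : ℝ) ^ k →
      |locDisc x u| ≤ |locDisc x v| + 22 * s * ((k + 1) / 2 ^ k) := by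
    intro k hk v hv u hu hvu hvol
    have h1 := hx k hk (v, u) (Finset.mem_filter.2 ⟨Finset.mem_product.2 ⟨hv, hu⟩, hvu, hvol⟩)
    simp only at h1
    have h2 : ∑ m, (boxInd u (x m) - boxInd v (x m)) - n * (∏ j, u j - ∏ j, v j) =
        n * (locDisc x v - locDisc x u) := by
      simp only [locDisc, Finset.sum_sub_distrib]
      field_simp
      ring
    rw [h2, abs_mul, abs_of_pos hn', mul_le_mul_iff_right₀ hn'] at h1
    have h3 := abs_sub_abs_le_abs_sub (locDisc x u) (locDisc x v)
    rw [abs_sub_comm] at h3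
    linarith
  have hlow : ∀ m ≤ K, |locDisc x (lowerPt m t)| ≤
      22 * s * ∑ k ∈ Finset.range m, ((k + 1 : ℝ) / 2 ^ k) := by
    intro m
    induction m with
    | zero =>
      intro _
      have h0 : ∏ j, (0 : Fin d → ℝ) j = 0 := Finset.prod_eq_zero (Finset.mem_univ ⟨0, hd⟩) rfl
      have h1 : ∀ y : Fin d → ℝ, boxInd 0 y = 0 := fun y => by
        rw [boxInd, if_neg]
        intro h
        have := h ⟨0, hd⟩
        exact absurd this.2 (not_lt.2 this.1)
      rw [lowerPt_zero ht]
      simp only [locDisc, h0, h1]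
      simp
    | succ m ih =>
      intro hm
      have h1 := step m (by omega) _ (lowerPt_mem ht) _ (lowerPt_mem ht) (lowerPt_mono (t := t)) (by
        have h2 := prod_lowerPt (k := m) hd ht
        have h3 : ∏ j, lowerPt (m + 1) t j ≤ ∏ j, t j :=
          Finset.prod_le_prod (fun j _ => (corners_subset (lowerPt_mem ht)).1 j)
            fun j _ => lowerPt_le hd ht j
        have : (0 : ℝ) ≤ (1 / 4) ^ m := by positivity
        linarith)
      rw [Finset.sum_range_succ, mul_add]
      linarith [ih (by omega)]
  have hq : (0 : ℝ) ≤ (1 / 4) ^ K := by positivity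
  have hKq : (1 / 4 : ℝ) ^ (K + 1) = (1 / 4) ^ K / 4 := by ring
  obtain ⟨u, huc, htu, huv⟩ := exists_upperPt hd ht hp
  have hvol := prod_lowerPt (k := K) hd ht
  have hv := hlow K le_rfl
  have hu := step K le_rfl _ (lowerPt_mem ht) u huc ((lowerPt_le hd ht).trans htu) (by linarith)
  have hsum := Finset.sum_range_succ (fun k : ℕ => ((k + 1 : ℝ) / 2 ^ k)) K
  have htot : ∑ k ∈ Finset.range (K + 1), ((k + 1 : ℝ) / 2 ^ k) ≤ 4 := by
    rw [sum_chain]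
    linarith [show (0 : ℝ) ≤ (2 * (K + 1 : ℕ) + 4) / 2 ^ (K + 1) by positivity]
  have hlast : (0 : ℝ) ≤ (K + 1) / 2 ^ K := by positivity
  have hv' : |locDisc x (lowerPt K t)| ≤ 88 * s := by nlinarith
  have hu' : |locDisc x u| ≤ 88 * s := by
    have : 22 * s * (∑ k ∈ Finset.range (K + 1), ((k + 1 : ℝ) / 2 ^ k)) ≤ 22 * s * 4 := by gcongr
    rw [hsum, mul_add] at this
    linarith
  have hc1 := sum_boxInd_div_mono x (lowerPt_le (k := K) hd ht)
  have hc2 := sum_boxInd_div_mono x htu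
  rw [abs_le] at hv' hu' ⊢
  simp only [locDisc] at hv' hu' ⊢
  constructor <;> linarith

/-- There is a universal constant `C > 0` such that for every `d` and `n` there are
`n` points in `[0,1]^d` with star discrepancy at most `C · √(d/n)`. -/
theorem stmt13 :
    ∃ C : ℝ, 0 < C ∧ ∀ d n : ℕ, 1 ≤ d → 1 ≤ n →
      ∃ x : Fin n → Fin d → ℝ, (∀ i, x i ∈ Set.Icc (0 : Fin d → ℝ) 1) ∧
        starDisc x ≤ C * Real.sqrt (d / n) := by
  refine ⟨96, by norm_num, fun d n hd hn => ?_⟩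
  have hd' : (1 : ℝ) ≤ d := by exact_mod_cast hd
  have hn' : (1 : ℝ) ≤ n := by exact_mod_cast hn
  obtain ⟨s, hs⟩ : ∃ s, s = Real.sqrt (d / n) := ⟨_, rfl⟩
  have hs0 : 0 < s := by rw [hs]; positivity
  rw [← hs]
  rcases le_or_gt s 1 with hs1 | hs1
  swap
  -- for `s > 1` the trivial bound `1` on the discrepancy suffices
  · refine ⟨0, fun i => ⟨le_rfl, fun j => zero_le_one⟩, starDisc_le (by positivity) fun t ht => ?_⟩
    linarith [abs_locDisc_le_one (n := n) 0 ht]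
  -- `K` is maximal with `s * 4 ^ K ≤ 1`
  obtain ⟨K, hK1, hK2⟩ := exists_nat_pow_near (x := 1 / s) (y := 4)
    (by rw [le_div_iff₀ hs0]; linarith) (by norm_num)
  rw [le_div_iff₀ hs0] at hK1
  rw [div_lt_iff₀ hs0] at hK2
  have hK : s * 2 ^ K ≤ 1 := by
    have : (2 : ℝ) ^ K ≤ 4 ^ K := by gcongr; norm_num
    nlinarith
  have hq : (1 / 4 : ℝ) ^ K ≤ 4 * s := by
    rw [one_div, inv_pow, inv_le_iff_one_le_mul₀ (by positivity)]
    rw [pow_succ] at hK2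
    linarith
  obtain ⟨x, hxS, hx⟩ := exists_points d n K hd hn s hs hK
  refine ⟨x, hxS, starDisc_le (by positivity) fun t ht => ?_⟩
  have hq0 : (0 : ℝ) ≤ (1 / 4) ^ K := by positivity
  rcases le_total ((1 / 4 : ℝ) ^ (K + 1)) (∏ j, t j) with hp | hp
  · linarith [chaining hd hn hs0.le hx ht hp]
  -- a box of small volume is compared with a box of volume `4 ^ (-(K + 1))` containing it
  · obtain ⟨t', ht', htt', hprod⟩ :=
      exists_enlarge ht (pow_le_one₀ (by norm_num) (by norm_num)) hp
    have h1 := chaining hd hn hs0.le hx ht' hprod.ge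
    have h2 := sum_boxInd_div_mono x htt'
    have h3 : 0 ≤ ∏ j, t j := Finset.prod_nonneg fun j _ => ht.1 j
    have h4 : 0 ≤ (∑ m, boxInd t (x m)) / (n : ℝ) := by rw [sum_boxInd]; positivity
    have h5 : (1 / 4 : ℝ) ^ (K + 1) = (1 / 4) ^ K / 4 := by ring
    rw [abs_le] at h1 ⊢
    simp only [locDisc] at h1 ⊢
    constructor <;> linarith
end

section
/- For every d ∈ ℕ and every finite point set x_1,…,x_n ∈ [0,1]^d with star discrepancy D*_∞(x_1,…,x_n) ≤ 1/64, one has n ≥ 0.18 · d. -/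
/-!
For `S ⊆ {1,…,d}` consider the anchored box `B S` whose `j`-th side is `exp (-1/d)` if `j ∈ S` and
`1` otherwise; its volume is `exp (-|S|/d)`. There are `2^d` such boxes, and each cuts out one of
at most `2^n` subsets of the point set.

Let `𝓕` be the family of all `S` whose boxes cut out one fixed subset, and let `U` be the union of
`𝓕`. The box `B U` is the intersection of the `B S`, `S ∈ 𝓕`, so it cuts out the same subset.
Two boxes with equal point count have volumes differing by at most `2/64`, so for `S ∈ 𝓕`
`exp (-|S|/d) - exp (-|U|/d) ≤ 1/32`, which forces `|U| - |S| ≤ d/8` (`card_gap`). The number of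
subsets of `U` missing at most `d/8` of its elements is at most `4^(d/8) (5/4)^d`, by weighting
each subset with `(1/4)^(|U| - |S|)` (`card_near_top`). Hence `2^d ≤ 2^n 4^(d/8) (5/4)^d`, which
gives even `d ≤ 4 n`.
-/

open MeasureTheory Set

/-- Upper corner of the box `B S`: side `exp (-1/d)` in the directions of `S`, side `1` in the
others. -/
noncomputable def corner {d : ℕ} (S : Finset (Fin d)) (j : Fin d) : ℝ :=
  if j ∈ S then Real.exp (-(1 / d)) else 1

/-- The indices of the points lying in the box `B S`. -/
noncomputable def inside {d n : ℕ} (x : Fin n → Fin d → ℝ) (S : Finset (Fin d)) :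
    Finset (Fin n) :=
  Finset.univ.filter fun i : Fin n => ∀ j, 0 ≤ x i j ∧ x i j < corner S j

lemma corner_mem {d : ℕ} (S : Finset (Fin d)) : corner S ∈ Set.Icc (0 : Fin d → ℝ) 1 := by
  constructor
  · intro j
    simp only [corner, Pi.zero_apply]
    split_ifs
    · positivity
    · norm_num
  · intro j
    simp only [corner, Pi.one_apply]
    split_ifs
    · rw [Real.exp_le_one_iff, neg_nonpos]
      positivity
    · exact le_rfl

lemma prod_corner {d : ℕ} (S : Finset (Fin d)) :
    ∏ j, corner S j = Real.exp (-(S.card / d)) := by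
  simp only [corner]
  rw [Finset.prod_ite_mem, Finset.univ_inter, Finset.prod_const, ← Real.exp_nat_mul]
  congr 1
  ring

/-- The supremum defining `starDisc` is over a bounded set, so it dominates each local
discrepancy. -/
lemma local_le_starDisc {d n : ℕ} (x : Fin n → Fin d → ℝ) (t : Fin d → ℝ)
    (ht : t ∈ Set.Icc (0 : Fin d → ℝ) 1) :
    |(∏ j, t j) -
      ((Finset.univ.filter fun i : Fin n => ∀ j, 0 ≤ x i j ∧ x i j < t j).card : ℝ) / n|
      ≤ starDisc x := by
  refine le_csSup ⟨1, ?_⟩ ⟨t, ht, rfl⟩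
  rintro v ⟨t, ht, rfl⟩
  have h0 : 0 ≤ ∏ j, t j := Finset.prod_nonneg fun j _ => ht.1 j
  have h1 : ∏ j, t j ≤ 1 := Finset.prod_le_one (fun j _ => ht.1 j) fun j _ => ht.2 j
  have h2 : ((Finset.univ.filter fun i : Fin n => ∀ j, 0 ≤ x i j ∧ x i j < t j).card : ℝ) / n
      ≤ 1 := by
    apply div_le_one_of_le₀ _ (Nat.cast_nonneg n)
    exact_mod_cast (Finset.card_le_univ _).trans_eq (Fintype.card_fin n)
  have h3 : 0 ≤ ((Finset.univ.filter fun i : Fin n => ∀ j, 0 ≤ x i j ∧ x i j < t j).card : ℝ) / n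
      := by positivity
  rw [abs_le]
  constructor <;> linarith

/-- If nested index sets give boxes with the same points, they differ in at most `d/8` elements. -/
lemma card_gap {d n : ℕ} (hd : 1 ≤ d) (x : Fin n → Fin d → ℝ) (hdisc : starDisc x ≤ 1 / 64)
    {S U : Finset (Fin d)} (hSU : S ⊆ U) (h : inside x S = inside x U) :
    U.card - S.card ≤ d / 8 := by
  have hS := (local_le_starDisc x _ (corner_mem S)).trans hdisc
  have hU := (local_le_starDisc x _ (corner_mem U)).trans hdisc
  change |_ - ((inside x S).card : ℝ) / n| ≤ _ at hS
  change |_ - ((inside x U).card : ℝ) / n| ≤ _ at hU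
  rw [prod_corner, abs_le] at hS hU
  rw [h] at hS
  have hd' : (0 : ℝ) < d := by exact_mod_cast hd
  have hcard : S.card ≤ U.card := Finset.card_le_card hSU
  have hUd : (U.card : ℝ) ≤ d := by
    exact_mod_cast (Finset.card_le_univ U).trans_eq (Fintype.card_fin d)
  set g : ℝ := ((U.card : ℝ) - S.card) / d with hg
  have hg0 : 0 ≤ g := div_nonneg (sub_nonneg.2 (by exact_mod_cast hcard)) hd'.le
  have hsplit : Real.exp (-(S.card / d)) = Real.exp (-(U.card / d)) * Real.exp g := by
    rw [← Real.exp_add, hg]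
    congr 1
    ring
  have hgexp : g + 1 ≤ Real.exp g := Real.add_one_le_exp g
  have hquarter : (1 / 4 : ℝ) ≤ Real.exp (-(U.card / d)) := by
    have h1 : Real.exp (-1) ≤ Real.exp (-(U.card / d : ℝ)) :=
      Real.exp_le_exp.2 (neg_le_neg ((div_le_one hd').2 hUd))
    have h2 := Real.exp_neg_one_gt_d9
    linarith
  have hg8 : g ≤ 1 / 8 := by
    have : Real.exp (-(U.card / d : ℝ)) * g ≤ 1 / 32 := by nlinarith
    nlinarith
  rw [hg, div_le_iff₀ hd'] at hg8
  rw [Nat.le_div_iff_mul_le (by norm_num)]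
  have : (((U.card - S.card : ℕ) : ℝ)) * 8 ≤ d := by
    rw [Nat.cast_sub hcard]
    linarith
  exact_mod_cast this

/-- Chernoff-type bound for the number of subsets of `U` missing at most `k` of its elements. -/
lemma card_near_top {d k : ℕ} (U : Finset (Fin d)) (F : Finset (Finset (Fin d)))
    (hsub : ∀ S ∈ F, S ⊆ U) (hgap : ∀ S ∈ F, U.card - S.card ≤ k) :
    (F.card : ℝ) ≤ 4 ^ k * (5 / 4) ^ d := by
  have hUd : U.card ≤ d := (Finset.card_le_univ U).trans_eq (Fintype.card_fin d)
  calc (F.card : ℝ) = ∑ S ∈ F, 1 := by simp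
    _ ≤ ∑ S ∈ F, (4 : ℝ) ^ k * (1 ^ S.card * (1 / 4) ^ (U.card - S.card)) := by
        refine Finset.sum_le_sum fun S hS => ?_
        have h : (1 / 4 : ℝ) ^ k ≤ (1 / 4) ^ (U.card - S.card) :=
          pow_le_pow_of_le_one (by norm_num) (by norm_num) (hgap S hS)
        calc (1 : ℝ) = 4 ^ k * (1 / 4) ^ k := by rw [← mul_pow]; norm_num
          _ ≤ _ := by rw [one_pow, one_mul]; gcongr
    _ ≤ ∑ S ∈ U.powerset, (4 : ℝ) ^ k * (1 ^ S.card * (1 / 4) ^ (U.card - S.card)) := by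
        refine Finset.sum_le_sum_of_subset_of_nonneg
          (fun S hS => Finset.mem_powerset.2 (hsub S hS)) fun S _ _ => by positivity
    _ = 4 ^ k * (5 / 4) ^ U.card := by
        rw [← Finset.mul_sum, Finset.sum_pow_mul_eq_add_pow]
        norm_num
    _ ≤ 4 ^ k * (5 / 4) ^ d := by
        gcongr
        norm_num

/-- The union of a nonempty family with a common point set `P` again has point set `P`. -/
lemma inside_sup {d n : ℕ} (x : Fin n → Fin d → ℝ) (P : Finset (Fin n))
    (F : Finset (Finset (Fin d))) (hne : F.Nonempty) (hF : ∀ S ∈ F, inside x S = P) :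
    inside x (F.sup id) = P := by
  have key : ∀ i, i ∈ inside x (F.sup id) ↔ ∀ S ∈ F, i ∈ inside x S := by
    intro i
    simp only [inside, Finset.mem_filter, Finset.mem_univ, true_and]
    have hq : Real.exp (-(1 / d : ℝ)) ≤ 1 := by
      rw [Real.exp_le_one_iff, neg_nonpos]
      positivity
    constructor
    · intro h S hS j
      refine ⟨(h j).1, (h j).2.trans_le ?_⟩
      by_cases hj : j ∈ S
      · have : j ∈ F.sup id := Finset.mem_sup.2 ⟨S, hS, hj⟩
        simp [corner, hj, this]
      · simp only [corner, hj, if_false]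
        split_ifs
        · exact hq
        · exact le_rfl
    · intro h j
      obtain ⟨S₀, hS₀⟩ := hne
      by_cases hj : j ∈ F.sup id
      · obtain ⟨S, hS, hjS⟩ := Finset.mem_sup.1 hj
        have hjS : j ∈ S := hjS
        have := h S hS j
        simpa only [corner, hj, hjS, if_true] using this
      · have hjS : j ∉ S₀ := fun hc => hj (Finset.mem_sup.2 ⟨S₀, hS₀, hc⟩)
        have := h S₀ hS₀ j
        simpa only [corner, hj, hjS, if_false] using this
  ext i
  rw [key]
  constructor
  · intro h
    obtain ⟨S, hS⟩ := hne
    exact hF S hS ▸ h S hS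
  · intro h S hS
    rw [hF S hS]
    exact h

/-- Pigeonhole over the at most `2^n` possible point sets. -/
lemma two_pow_le {d n : ℕ} (hd : 1 ≤ d) (x : Fin n → Fin d → ℝ) (hdisc : starDisc x ≤ 1 / 64) :
    (2 : ℝ) ^ d ≤ 2 ^ n * (4 ^ (d / 8) * (5 / 4) ^ d) := by
  classical
  have hfib : ∀ P : Finset (Fin n),
      ((Finset.univ.filter fun S : Finset (Fin d) => inside x S = P).card : ℝ)
        ≤ 4 ^ (d / 8) * (5 / 4) ^ d := by
    intro P
    set F := Finset.univ.filter fun S : Finset (Fin d) => inside x S = P with hFdef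
    have hF : ∀ S ∈ F, inside x S = P := fun S hS => (Finset.mem_filter.1 hS).2
    have hsub : ∀ S ∈ F, S ⊆ F.sup id := fun S hS => Finset.le_sup (f := id) hS
    refine card_near_top (F.sup id) F hsub fun S hS => ?_
    refine card_gap hd x hdisc (hsub S hS) ?_
    rw [hF S hS, inside_sup x P F ⟨S, hS⟩ hF]
  have hcount := Finset.card_eq_sum_card_fiberwise (f := inside x)
    (s := (Finset.univ : Finset (Finset (Fin d)))) (t := Finset.univ) (fun _ _ => by simp)
  have hcount' : (2 : ℝ) ^ d = ∑ P : Finset (Fin n),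
      ((Finset.univ.filter fun S : Finset (Fin d) => inside x S = P).card : ℝ) := by
    rw [Finset.card_univ, Fintype.card_finset, Fintype.card_fin] at hcount
    exact_mod_cast hcount
  rw [hcount']
  refine (Finset.sum_le_sum fun P _ => hfib P).trans_eq ?_
  simp

/-- Any point set in `[0,1]^d` with star discrepancy at most `1/64` must have
at least `0.18 · d` points. -/
theorem stmt14 (d n : ℕ) (hd : 1 ≤ d) (x : Fin n → Fin d → ℝ)
    (hx : ∀ i, x i ∈ Set.Icc (0 : Fin d → ℝ) 1)
    (hdisc : starDisc x ≤ 1 / 64) :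
    (0.18 : ℝ) * d ≤ n := by
  have h := two_pow_le hd x hdisc
  -- Fourth powers remove the rounding in `d / 8`: `(4 ^ (d / 8)) ^ 4 = 2 ^ (8 * (d / 8)) ≤ 2 ^ d`.
  have h4 : ((2 : ℝ) ^ d) ^ 4 ≤ (2 ^ n * (4 ^ (d / 8) * (5 / 4) ^ d)) ^ 4 := by gcongr
  have hk : ((4 : ℝ) ^ (d / 8)) ^ 4 ≤ 2 ^ d := by
    have : ((4 : ℝ) ^ (d / 8)) ^ 4 = 2 ^ (8 * (d / 8)) := by
      rw [show (4 : ℝ) = 2 ^ 2 by norm_num, ← pow_mul, ← pow_mul]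
      congr 1
      ring
    rw [this]
    exact pow_le_pow_right₀ (by norm_num) (Nat.mul_div_le d 8)
  have h5 : (2 : ℝ) ^ d * (8 : ℝ) ^ d ≤ 2 ^ (4 * n) * 8 ^ d := by
    calc (2 : ℝ) ^ d * (8 : ℝ) ^ d = (2 ^ d) ^ 4 := by
          rw [← mul_pow, ← pow_mul, mul_comm d 4, pow_mul]
          norm_num
      _ ≤ (2 ^ n * (4 ^ (d / 8) * (5 / 4) ^ d)) ^ 4 := h4
      _ = 2 ^ (4 * n) * ((4 ^ (d / 8)) ^ 4 * ((5 / 4) ^ 4) ^ d) := by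
          rw [mul_pow, mul_pow, ← pow_mul 2 n, ← pow_mul (5 / 4) d, ← pow_mul (5 / 4) 4,
            mul_comm n, mul_comm d]
      _ ≤ 2 ^ (4 * n) * (2 ^ d * 4 ^ d) := by
          gcongr
          norm_num
      _ = 2 ^ (4 * n) * 8 ^ d := by
          rw [← mul_pow]
          norm_num
  have h6 : (2 : ℝ) ^ d ≤ 2 ^ (4 * n) := le_of_mul_le_mul_right h5 (by positivity)
  have h7 : d ≤ 4 * n := (pow_le_pow_iff_right₀ (by norm_num)).1 h6
  have h8 : (d : ℝ) ≤ 4 * n := by exact_mod_cast h7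
  linarith [(Nat.cast_nonneg d : (0 : ℝ) ≤ d)]
end
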